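/- Let ν ≥ 1 and let q_1, q_2 : [0,2π)^ν → ℝ be bounded measurable functions with η ≤ q_k(x) ≤ M for almost every x, for some constants 0 < η ≤ M. For n ∈ ℕ set Q_k^{(n)} := T_n(q_k) (Hermitian positive definite Toeplitz compressions), R_{k,n} := Q_k^{(n)} (Q_k^{(n)} + I)^{−1}, W_{n,t} := R_{1,n}^{t/2} R_{2,n}^{1−t} R_{1,n}^{t/2}, and define ψ_n(t) := −t Tr log(Q_1^{(n)} + I) − (1−t) Tr log(Q_2^{(n)} + I) − Tr log(I − W_{n,t}) for t ∈ [0,1]. Then the sequence of functions (1/n^ν) ψ_n converges uniformly on [0,1] to ψ(t) := −(2π)^{−ν} ∫_{[0,2π)^ν} log[ (1 + q_1(x))^t (1 + q_2(x))^{1−t} − q_1(x)^t q_2(x)^{1−t} ] dx. -/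

import Mathlib

open MeasureTheory Filter Matrix Set

noncomputable section

/-- The cube `[0, 2π)^ν`. -/
def cube (ν : ℕ) : Set (Fin ν → ℝ) := Set.univ.pi fun _ => Set.Ico 0 (2 * Real.pi)

/-- Fourier coefficient of `a : [0,2π)^ν → ℂ` at `j ∈ ℤ^ν`. -/
def fourierCoefficient {ν : ℕ} (a : (Fin ν → ℝ) → ℂ) (j : Fin ν → ℤ) : ℂ :=
  (((2 * Real.pi) ^ ν : ℝ) : ℂ)⁻¹ *
    ∫ x in cube ν, a x * Complex.exp (-Complex.I * ∑ m, (j m : ℂ) * (x m : ℂ))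

/-- The Toeplitz compression `T_n(a)` with entries `â(j−k)`, `j,k ∈ {0,…,n−1}^ν`. -/
def toeplitz {ν : ℕ} (n : ℕ) (a : (Fin ν → ℝ) → ℂ) :
    Matrix (Fin ν → Fin n) (Fin ν → Fin n) ℂ :=
  Matrix.of fun j k => fourierCoefficient a fun m => (j m : ℤ) - (k m : ℤ)

/-- Real power of a positive matrix via the continuous functional calculus. -/
def mpow {m : Type*} [Fintype m] [DecidableEq m] (A : Matrix m m ℂ) (t : ℝ) :
    Matrix m m ℂ := cfc (fun x : ℝ => x ^ t) A

/-- Logarithm of a positive definite matrix via the continuous functional calculus. -/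
def mlog {m : Type*} [Fintype m] [DecidableEq m] (A : Matrix m m ℂ) : Matrix m m ℂ :=
  cfc Real.log A

/-- `R = Q(Q + I)⁻¹`. -/
def Rmat {m : Type*} [Fintype m] [DecidableEq m] (Q : Matrix m m ℂ) : Matrix m m ℂ :=
  Q * (Q + 1)⁻¹

/-- `W_t = R₁^{t/2} R₂^{1−t} R₁^{t/2}`. -/
def Wmat {m : Type*} [Fintype m] [DecidableEq m] (Q₁ Q₂ : Matrix m m ℂ) (t : ℝ) :
    Matrix m m ℂ :=
  mpow (Rmat Q₁) (t / 2) * mpow (Rmat Q₂) (1 - t) * mpow (Rmat Q₁) (t / 2)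

/-- `ψ_n(t) = −t Tr log(Q₁⁽ⁿ⁾+I) − (1−t) Tr log(Q₂⁽ⁿ⁾+I) − Tr log(I − W_{n,t})`,
where `Q_k⁽ⁿ⁾ = T_n(q_k)`. -/
def psiN {ν : ℕ} (q₁ q₂ : (Fin ν → ℝ) → ℝ) (n : ℕ) (t : ℝ) : ℝ :=
  -t * ((mlog (toeplitz n (fun x => (q₁ x : ℂ)) + 1)).trace).re -
    (1 - t) * ((mlog (toeplitz n (fun x => (q₂ x : ℂ)) + 1)).trace).re -
    ((mlog (1 - Wmat (toeplitz n (fun x => (q₁ x : ℂ)))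
        (toeplitz n (fun x => (q₂ x : ℂ))) t)).trace).re

/-- The limit function
`ψ(t) = −(2π)^{−ν} ∫ log[(1+q₁(x))^t (1+q₂(x))^{1−t} − q₁(x)^t q₂(x)^{1−t}] dx`. -/
def psiLimit {ν : ℕ} (q₁ q₂ : (Fin ν → ℝ) → ℝ) (t : ℝ) : ℝ :=
  -(((2 * Real.pi) ^ ν : ℝ)⁻¹ *
    ∫ x in cube ν,
      Real.log ((1 + q₁ x) ^ t * (1 + q₂ x) ^ (1 - t) - (q₁ x) ^ t * (q₂ x) ^ (1 - t)))

section
section torus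
open scoped Pointwise
local instance instMSUAC : MeasureSpace UnitAddCircle := ⟨AddCircle.haarAddCircle⟩
local instance instHaarUAC : Measure.IsAddHaarMeasure (volume : Measure UnitAddCircle) :=
  inferInstanceAs (Measure.IsAddHaarMeasure AddCircle.haarAddCircle)
local instance instProbUAC : IsProbabilityMeasure (volume : Measure UnitAddCircle) :=
  inferInstanceAs (IsProbabilityMeasure AddCircle.haarAddCircle)

lemma torus_integral {ν : ℕ} {E : Type*} [NormedAddCommGroup E] [NormedSpace ℝ E]
    (F : UnitAddTorus (Fin ν) → E) :
    ∫ y, F y = ((2 * Real.pi) ^ ν : ℝ)⁻¹ •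
      ∫ x in cube ν, F (fun i => ((x i / (2 * Real.pi) : ℝ) : UnitAddCircle)) := by
  have hpi : (0:ℝ) < 2 * Real.pi := by positivity
  rw [UnitAddTorus.integral_preimage F (fun _ => 0)]
  have h1 : ({x : Fin ν → ℝ | ∀ i, x i ∈ Ioc (0:ℝ) (0+1)} : Set (Fin ν → ℝ)) =ᵐ[volume]
      (Set.univ.pi fun _ : Fin ν => Ico (0:ℝ) 1) := by
    have e1 := Measure.univ_pi_Ioc_ae_eq_Icc (μ := fun _ : Fin ν => (volume : Measure ℝ))
      (f := fun _ => 0) (g := fun _ => 1)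
    have e2 := Measure.univ_pi_Ico_ae_eq_Icc (μ := fun _ : Fin ν => (volume : Measure ℝ))
      (f := fun _ => 0) (g := fun _ => 1)
    have : ({x : Fin ν → ℝ | ∀ i, x i ∈ Ioc (0:ℝ) (0+1)} : Set (Fin ν → ℝ)) =
      (Set.univ.pi fun _ : Fin ν => Ioc (0:ℝ) 1) := by ext x; simp
    rw [this]
    exact e1.trans e2.symm
  rw [setIntegral_congr_set h1]
  have h2 := Measure.setIntegral_comp_smul_of_pos (volume : Measure (Fin ν → ℝ))
    (fun x => F (fun i => ((x i / (2 * Real.pi) : ℝ) : UnitAddCircle)))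
    (Set.univ.pi fun _ : Fin ν => Ico (0:ℝ) 1) hpi
  have h3 : (2 * Real.pi) • (Set.univ.pi fun _ : Fin ν => Ico (0:ℝ) 1) = cube ν := by
    ext x
    rw [Set.mem_smul_set_iff_inv_smul_mem₀ hpi.ne']
    simp only [cube, Set.mem_pi, Set.mem_univ, true_imp_iff, Pi.smul_apply, smul_eq_mul, Set.mem_Ico]
    refine forall_congr' fun i => ?_
    rw [inv_mul_eq_div, le_div_iff₀ hpi, div_lt_iff₀ hpi]; simp
  rw [h3] at h2
  simp only [Module.finrank_fin_fun] at h2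
  rw [← h2]
  congr 1
  ext x
  congr 1
  ext i
  simp only [Pi.smul_apply, smul_eq_mul]
  congr 1
  field_simp

lemma parseval {ν : ℕ} (f : (Fin ν → ℝ) → ℂ) (hf : Measurable f) (C : ℝ) (hC : ∀ x, ‖f x‖ ≤ C) :
    HasSum (fun j => ‖fourierCoefficient f j‖ ^ 2)
      (((2 * Real.pi) ^ ν : ℝ)⁻¹ * ∫ x in cube ν, ‖f x‖ ^ 2) := by
  have hpi : (0:ℝ) < 2 * Real.pi := by positivity
  have : Fact ((0:ℝ) < 1) := ⟨one_pos⟩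
  let φ : UnitAddTorus (Fin ν) → (Fin ν → ℝ) := fun y i =>
    2 * Real.pi * (AddCircle.measurableEquivIco 1 0 (y i) : ℝ)
  have hφm : Measurable φ := by
    refine measurable_pi_lambda _ fun i => ?_
    refine Measurable.const_mul ?_ _
    exact measurable_subtype_coe.comp ((AddCircle.measurableEquivIco 1 0).measurable.comp
      (measurable_pi_apply i))
  have hφ : ∀ x ∈ cube ν, φ (fun i => ((x i / (2 * Real.pi) : ℝ) : UnitAddCircle)) = x := by
    intro x hx
    ext i
    have hxi := hx i (Set.mem_univ i)
    have : x i / (2 * Real.pi) ∈ Ico (0:ℝ) (0+1) := by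
      constructor
      · exact div_nonneg hxi.1 hpi.le
      · rw [div_lt_iff₀ hpi]; simpa using hxi.2
    have h := AddCircle.equivIco_coe_eq (p := (1:ℝ)) (a := 0) this
    simp only [φ, AddCircle.measurableEquivIco]
    change 2 * Real.pi * ((AddCircle.equivIco 1 0 ((x i / (2 * Real.pi) : ℝ) : UnitAddCircle)) : ℝ) = x i
    rw [h]
    field_simp
  let g : UnitAddTorus (Fin ν) → ℂ := f ∘ φ
  have hg : MemLp g 2 volume :=
    MemLp.of_bound (hf.comp hφm).aestronglyMeasurable C (Eventually.of_forall fun y => hC _)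
  have hcm : MeasurableSet (cube ν) := MeasurableSet.univ_pi fun _ => measurableSet_Ico
  have key := UnitAddTorus.hasSum_sq_mFourierCoeff (hg.toLp g)
  have e1 : ∫ t, ‖(hg.toLp g) t‖ ^ 2 = ((2 * Real.pi) ^ ν : ℝ)⁻¹ * ∫ x in cube ν, ‖f x‖ ^ 2 := by
    have : ∫ t, ‖(hg.toLp g) t‖ ^ 2 = ∫ t, ‖g t‖ ^ 2 := by
      refine integral_congr_ae ?_
      filter_upwards [hg.coeFn_toLp] with t ht
      rw [ht]
    rw [this, torus_integral, smul_eq_mul]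
    congr 1
    refine setIntegral_congr_fun hcm fun x hx => ?_
    simp only [g, Function.comp, hφ x hx]
  have e2 : ∀ j, UnitAddTorus.mFourierCoeff (hg.toLp g) j = fourierCoefficient f j := by
    intro j
    have : UnitAddTorus.mFourierCoeff (hg.toLp g) j = ∫ t, UnitAddTorus.mFourier (-j) t • g t := by
      refine integral_congr_ae ?_
      filter_upwards [hg.coeFn_toLp] with t ht
      rw [ht]
    rw [this, torus_integral, fourierCoefficient, Complex.real_smul, Complex.ofReal_inv]
    congr 1
    refine setIntegral_congr_fun hcm fun x hx => ?_
    simp only [g, Function.comp, hφ x hx, smul_eq_mul]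
    rw [mul_comm]
    congr 1
    simp only [UnitAddTorus.mFourier, ContinuousMap.coe_mk, fourier_coe_apply, ← Complex.exp_sum]
    congr 1
    rw [Finset.mul_sum]
    refine Finset.sum_congr rfl fun m _ => ?_
    have : (Real.pi : ℂ) ≠ 0 := by exact_mod_cast Real.pi_ne_zero
    push_cast [Pi.neg_apply]
    field_simp
  rw [e1] at key
  simpa only [e2] using key
end torus

end

section
def cmean {ν : ℕ} (f : (Fin ν → ℝ) → ℝ) : ℝ := ((2 * Real.pi) ^ ν : ℝ)⁻¹ * ∫ x in cube ν, f x

def BM {ν : ℕ} (f : (Fin ν → ℝ) → ℂ) : Prop := Measurable f ∧ ∃ C : ℝ, ∀ x, ‖f x‖ ≤ C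

def ee {ν : ℕ} (j : Fin ν → ℤ) (x : Fin ν → ℝ) : ℂ :=
  Complex.exp (Complex.I * ∑ m, (j m : ℂ) * (x m : ℂ))

lemma ee_norm {ν : ℕ} (j : Fin ν → ℤ) (x : Fin ν → ℝ) : ‖ee j x‖ = 1 := by
  have : (∑ m, (j m : ℂ) * (x m : ℂ)) = ((∑ m, (j m : ℝ) * (x m : ℝ) : ℝ) : ℂ) := by push_cast; rfl
  rw [ee, this, mul_comm, Complex.norm_exp_ofReal_mul_I]

lemma ee_meas {ν : ℕ} (j : Fin ν → ℤ) : Measurable (ee j) := by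
  unfold ee
  fun_prop

lemma BM_ee {ν : ℕ} (j : Fin ν → ℤ) : BM (ee j) := ⟨ee_meas j, 1, fun x => (ee_norm j x).le⟩

lemma BM.add {ν : ℕ} {f g : (Fin ν → ℝ) → ℂ} (hf : BM f) (hg : BM g) : BM (fun x => f x + g x) := by
  obtain ⟨hf, C, hC⟩ := hf
  obtain ⟨hg, D, hD⟩ := hg
  exact ⟨hf.add hg, C + D, fun x => (norm_add_le _ _).trans (add_le_add (hC x) (hD x))⟩

lemma BM.sub {ν : ℕ} {f g : (Fin ν → ℝ) → ℂ} (hf : BM f) (hg : BM g) : BM (fun x => f x - g x) := by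
  obtain ⟨hf, C, hC⟩ := hf
  obtain ⟨hg, D, hD⟩ := hg
  exact ⟨hf.sub hg, C + D, fun x => (norm_sub_le _ _).trans (add_le_add (hC x) (hD x))⟩

lemma BM.mul {ν : ℕ} {f g : (Fin ν → ℝ) → ℂ} (hf : BM f) (hg : BM g) : BM (fun x => f x * g x) := by
  obtain ⟨hf, C, hC⟩ := hf
  obtain ⟨hg, D, hD⟩ := hg
  refine ⟨hf.mul hg, C * D, fun x => ?_⟩
  rw [norm_mul]
  exact mul_le_mul (hC x) (hD x) (norm_nonneg _) ((norm_nonneg _).trans (hC x))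

lemma BM_const {ν : ℕ} (c : ℂ) : BM (fun _ : Fin ν → ℝ => c) := ⟨measurable_const, ‖c‖, fun _ => le_rfl⟩

lemma BM_sum {ν : ℕ} {ι : Type*} (s : Finset ι) {f : ι → (Fin ν → ℝ) → ℂ} (hf : ∀ i, BM (f i)) :
    BM (fun x => ∑ i ∈ s, f i x) := by
  classical
  induction s using Finset.induction_on with
  | empty => simpa using BM_const (ν := ν) 0
  | insert a s ha ih =>
    simp only [Finset.sum_insert ha]
    exact (hf a).add ih

lemma cube_meas (ν : ℕ) : MeasurableSet (cube ν) := MeasurableSet.univ_pi fun _ => measurableSet_Ico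

lemma cube_vol (ν : ℕ) : (volume (cube ν)).toReal = (2 * Real.pi) ^ ν := by
  have hpi : (0:ℝ) < 2 * Real.pi := by positivity
  rw [cube, Real.volume_pi_Ico_toReal]
  · simp
  · intro i; exact hpi.le

lemma cube_vol_lt (ν : ℕ) : volume (cube ν) < ⊤ := by
  rw [cube, Real.volume_pi_Ico]
  exact ENNReal.prod_lt_top fun _ _ => ENNReal.ofReal_lt_top

instance cube_fin (ν : ℕ) : IsFiniteMeasure (volume.restrict (cube ν)) :=
  ⟨by simpa using cube_vol_lt ν⟩

lemma BM.integrable {ν : ℕ} {f : (Fin ν → ℝ) → ℂ} (hf : BM f) :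
    Integrable f (volume.restrict (cube ν)) := by
  obtain ⟨hf, C, hC⟩ := hf
  exact Integrable.of_bound hf.aestronglyMeasurable C (Eventually.of_forall hC)

lemma fc_eq {ν : ℕ} (f : (Fin ν → ℝ) → ℂ) (j : Fin ν → ℤ) :
    fourierCoefficient f j = (((2 * Real.pi) ^ ν : ℝ) : ℂ)⁻¹ * ∫ x in cube ν, f x * ee (-j) x := by
  unfold fourierCoefficient ee
  congr 2
  ext x
  congr 2
  simp [Finset.sum_neg_distrib]

lemma fc_add {ν : ℕ} {f g : (Fin ν → ℝ) → ℂ} (hf : BM f) (hg : BM g) (j : Fin ν → ℤ) :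
    fourierCoefficient (fun x => f x + g x) j = fourierCoefficient f j + fourierCoefficient g j := by
  simp only [fc_eq, add_mul]
  rw [integral_add (hf.mul (BM_ee _)).integrable (hg.mul (BM_ee _)).integrable, mul_add]

lemma fc_sub {ν : ℕ} {f g : (Fin ν → ℝ) → ℂ} (hf : BM f) (hg : BM g) (j : Fin ν → ℤ) :
    fourierCoefficient (fun x => f x - g x) j = fourierCoefficient f j - fourierCoefficient g j := by
  simp only [fc_eq, sub_mul]
  rw [integral_sub (hf.mul (BM_ee _)).integrable (hg.mul (BM_ee _)).integrable, mul_sub]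

lemma fc_smul {ν : ℕ} (c : ℂ) (f : (Fin ν → ℝ) → ℂ) (j : Fin ν → ℤ) :
    fourierCoefficient (fun x => c * f x) j = c * fourierCoefficient f j := by
  simp only [fc_eq, mul_assoc]
  rw [integral_const_mul]
  ring

lemma fc_sum {ν : ℕ} {ι : Type*} (s : Finset ι) {f : ι → (Fin ν → ℝ) → ℂ} (hf : ∀ i, BM (f i))
    (j : Fin ν → ℤ) :
    fourierCoefficient (fun x => ∑ i ∈ s, f i x) j = ∑ i ∈ s, fourierCoefficient (f i) j := by
  simp only [fc_eq, Finset.sum_mul]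
  rw [integral_finsetSum, Finset.mul_sum]
  exact fun i _ => ((hf i).mul (BM_ee _)).integrable

lemma ee_add {ν : ℕ} (j k : Fin ν → ℤ) (x) : ee (j + k) x = ee j x * ee k x := by
  unfold ee
  rw [← Complex.exp_add, ← mul_add, ← Finset.sum_add_distrib]
  simp [add_mul]

lemma fc_shift {ν : ℕ} (f : (Fin ν → ℝ) → ℂ) (j k : Fin ν → ℤ) :
    fourierCoefficient (fun x => f x * ee k x) j = fourierCoefficient f (j - k) := by
  simp only [fc_eq, mul_assoc, ← ee_add]
  congr 4
  ext x
  congr 2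
  abel

lemma fc_one_zero {ν : ℕ} : fourierCoefficient (fun _ : Fin ν → ℝ => (1:ℂ)) 0 = 1 := by
  have hpi : (0:ℝ) < (2 * Real.pi) ^ ν := by positivity
  rw [fc_eq]
  simp only [ee, neg_zero, Pi.zero_apply, Int.cast_zero, zero_mul, Finset.sum_const_zero, mul_zero,
    Complex.exp_zero, mul_one, setIntegral_const, measureReal_def, cube_vol]
  rw [Complex.real_smul, mul_one, inv_mul_cancel₀]
  exact_mod_cast hpi.ne'

lemma cmean_const {ν : ℕ} (c : ℝ) : cmean (fun _ : Fin ν → ℝ => c) = c := by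
  have hpi : (0:ℝ) < (2 * Real.pi) ^ ν := by positivity
  simp only [cmean, setIntegral_const, measureReal_def, cube_vol, smul_eq_mul]
  field_simp

lemma BM.parseval {ν : ℕ} {f : (Fin ν → ℝ) → ℂ} (hf : BM f) :
    HasSum (fun j => ‖fourierCoefficient f j‖ ^ 2) (cmean fun x => ‖f x‖ ^ 2) := by
  obtain ⟨hf, C, hC⟩ := hf
  exact _root_.parseval f hf C hC

lemma fc_one {ν : ℕ} (j : Fin ν → ℤ) :
    fourierCoefficient (fun _ : Fin ν → ℝ => (1:ℂ)) j = if j = 0 then 1 else 0 := by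
  split_ifs with h
  · rw [h, fc_one_zero]
  · have h1 := (BM_const (ν := ν) 1).parseval
    simp only [norm_one, one_pow, cmean_const] at h1
    have h2 := sum_le_hasSum {0, j} (fun i _ => by positivity) h1
    rw [Finset.sum_pair (Ne.symm h), fc_one_zero] at h2
    norm_num at h2
    exact h2

lemma fc_ee {ν : ℕ} (j k : Fin ν → ℤ) :
    fourierCoefficient (ee k) j = if j = k then 1 else 0 := by
  have := fc_shift (fun _ => 1) j k
  simp only [one_mul] at this
  rw [show (fun x => ee k x) = ee k from rfl, fc_one] at this
  simpa [sub_eq_zero] using this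

/-- embedding of the box in the lattice -/
def bx {ν n : ℕ} (j : Fin ν → Fin n) : Fin ν → ℤ := fun m => (j m : ℤ)

lemma bx_inj {ν n : ℕ} : Function.Injective (bx : (Fin ν → Fin n) → _) := by
  intro j k h
  ext m
  have := congrFun h m
  simpa [bx] using this

def bxe (ν n : ℕ) : (Fin ν → Fin n) ↪ (Fin ν → ℤ) := ⟨bx, bx_inj⟩

lemma toeplitz_apply {ν : ℕ} (n : ℕ) (a : (Fin ν → ℝ) → ℂ) (j k) :
    toeplitz n a j k = fourierCoefficient a (bx j - bx k) := rfl

def trig {ν n : ℕ} (v : (Fin ν → Fin n) → ℂ) (x : Fin ν → ℝ) : ℂ := ∑ k, v k * ee (bx k) x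

lemma BM_trig {ν n : ℕ} (v : (Fin ν → Fin n) → ℂ) : BM (trig v) :=
  BM_sum _ fun _ => (BM_const _).mul (BM_ee _)

lemma fc_mul_trig {ν n : ℕ} {a : (Fin ν → ℝ) → ℂ} (ha : BM a) (v : (Fin ν → Fin n) → ℂ)
    (j : Fin ν → ℤ) :
    fourierCoefficient (fun x => a x * trig v x) j = ∑ k, fourierCoefficient a (j - bx k) * v k := by
  have : (fun x => a x * trig v x) = fun x => ∑ k, v k * (a x * ee (bx k) x) := by
    ext x
    rw [trig, Finset.mul_sum]
    exact Finset.sum_congr rfl fun k _ => by ring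
  rw [this, fc_sum _ (fun k => (BM_const _).mul (ha.mul (BM_ee _)))]
  simp only [fc_smul, fc_shift]
  exact Finset.sum_congr rfl fun k _ => by ring

lemma fc_trig {ν n : ℕ} (v : (Fin ν → Fin n) → ℂ) (j : Fin ν → ℤ) :
    fourierCoefficient (trig v) j = ∑ k, if j = bx k then v k else 0 := by
  have := fc_mul_trig (BM_const 1) v j
  simp only [one_mul] at this
  rw [show (fun x => trig v x) = trig v from rfl] at this
  rw [this]
  refine Finset.sum_congr rfl fun k _ => ?_
  rw [fc_one]
  simp [sub_eq_zero]

lemma fc_trig_bx {ν n : ℕ} (v : (Fin ν → Fin n) → ℂ) (j : Fin ν → Fin n) :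
    fourierCoefficient (trig v) (bx j) = v j := by
  rw [fc_trig]
  simp [bx_inj.eq_iff]

lemma fc_trig_of_notMem {ν n : ℕ} (v : (Fin ν → Fin n) → ℂ) (j : Fin ν → ℤ)
    (hj : j ∉ Set.range (bx : (Fin ν → Fin n) → _)) :
    fourierCoefficient (trig v) j = 0 := by
  rw [fc_trig]
  refine Finset.sum_eq_zero fun k _ => ?_
  rw [if_neg]
  rintro rfl
  exact hj ⟨k, rfl⟩

lemma bessel {ν n : ℕ} {f : (Fin ν → ℝ) → ℂ} (hf : BM f) :
    ∑ j : Fin ν → Fin n, ‖fourierCoefficient f (bx j)‖ ^ 2 ≤ cmean fun x => ‖f x‖ ^ 2 := by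
  have := sum_le_hasSum (Finset.univ.map (bxe ν n)) (fun i _ => by positivity) hf.parseval
  rw [Finset.sum_map] at this
  exact this

lemma cmean_trig {ν n : ℕ} (v : (Fin ν → Fin n) → ℂ) :
    (cmean fun x => ‖trig v x‖ ^ 2) = ∑ j, ‖v j‖ ^ 2 := by
  have h1 := (BM_trig v).parseval
  have h2 : HasSum (fun j => ‖fourierCoefficient (trig v) j‖ ^ 2)
      (∑ j ∈ Finset.univ.map (bxe ν n), ‖fourierCoefficient (trig v) j‖ ^ 2) := by
    refine hasSum_sum_of_ne_finset_zero fun j hj => ?_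
    rw [fc_trig_of_notMem]
    · simp
    · rintro ⟨k, rfl⟩
      exact hj (Finset.mem_map.2 ⟨k, Finset.mem_univ _, rfl⟩)
  rw [h1.unique h2, Finset.sum_map]
  refine Finset.sum_congr rfl fun k _ => ?_
  rw [show (bxe ν n) k = bx k from rfl, fc_trig_bx]

lemma cmean_mono {ν : ℕ} {f g : (Fin ν → ℝ) → ℂ} (hf : BM f) (hg : BM g) (C : ℝ) 
    (h : ∀ x, ‖f x‖ ≤ C * ‖g x‖) :
    (cmean fun x => ‖f x‖ ^ 2) ≤ C ^ 2 * cmean fun x => ‖g x‖ ^ 2 := by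
  have hpi : (0:ℝ) < (2 * Real.pi) ^ ν := by positivity
  have hi : ∀ {f : (Fin ν → ℝ) → ℂ}, BM f → Integrable (fun x => ‖f x‖ ^ 2) (volume.restrict (cube ν)) := by
    intro f hf
    have := (hf.mul hf).integrable.norm
    simpa [norm_mul, sq] using this
  unfold cmean
  rw [mul_left_comm]
  refine mul_le_mul_of_nonneg_left ?_ (by positivity)
  rw [← integral_const_mul]
  refine integral_mono (hi hf) ((hi hg).const_mul _) fun x => ?_
  simp only
  rw [← mul_pow]
  exact pow_le_pow_left₀ (norm_nonneg _) (h x) 2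

open scoped Matrix.Norms.L2Operator

lemma toeplitz_mulVec {ν n : ℕ} {a : (Fin ν → ℝ) → ℂ} (ha : BM a) (v : (Fin ν → Fin n) → ℂ) (j) :
    (toeplitz n a *ᵥ v) j = fourierCoefficient (fun x => a x * trig v x) (bx j) := by
  rw [fc_mul_trig ha]
  rfl

lemma norm_toeplitz_le {ν : ℕ} (n : ℕ) {a : (Fin ν → ℝ) → ℂ} (ha : Measurable a) (C : ℝ) (hC0 : 0 ≤ C)
    (hC : ∀ x, ‖a x‖ ≤ C) : ‖toeplitz n a‖ ≤ C := by
  have ha' : BM a := ⟨ha, C, hC⟩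
  rw [Matrix.cstar_norm_def]
  refine ContinuousLinearMap.opNorm_le_bound _ hC0 fun v => ?_
  rw [← abs_of_nonneg (norm_nonneg _), ← abs_of_nonneg (mul_nonneg hC0 (norm_nonneg v)), ← sq_le_sq]
  rw [mul_pow, EuclideanSpace.norm_sq_eq, EuclideanSpace.norm_sq_eq]
  simp only [Matrix.ofLp_toEuclideanCLM, toeplitz_mulVec ha']
  refine (bessel (ha'.mul (BM_trig _))).trans ?_
  refine (cmean_mono (ha'.mul (BM_trig _)) (BM_trig v.ofLp) C fun x => ?_).trans ?_
  · rw [norm_mul]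
    exact mul_le_mul_of_nonneg_right (hC x) (norm_nonneg _)
  · rw [cmean_trig]

end

section
open Topology
open scoped Matrix.Norms.L2Operator

def fro {m : Type*} [Fintype m] (X : Matrix m m ℂ) : ℝ := ∑ k, ∑ j, ‖X j k‖ ^ 2

lemma mem_range_bx {ν n : ℕ} (m : Fin ν → ℤ) :
    m ∈ Set.range (bx : (Fin ν → Fin n) → _) ↔ ∀ i, 0 ≤ m i ∧ m i < n := by
  constructor
  · rintro ⟨k, rfl⟩ i
    simp [bx]
  · intro h
    refine ⟨fun i => ⟨(m i).toNat, by have := h i; omega⟩, ?_⟩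
    ext i
    have := h i
    simp [bx]; omega

open Classical in
def bad {ν : ℕ} (n : ℕ) (m : Fin ν → ℤ) : ℕ :=
  (Finset.univ.filter fun k : Fin ν → Fin n => m + bx k ∉ Set.range (bx : (Fin ν → Fin n) → _)).card

lemma card_one (n : ℕ) (m : ℤ) :
    (n : ℤ) - |m| ≤ ((Finset.univ.filter fun x : Fin n => 0 ≤ m + x ∧ m + x < n).card : ℤ) := by
  have h : (Finset.Ico (max 0 (-m)) (min n (n - m))).card ≤
      (Finset.univ.filter fun x : Fin n => 0 ≤ m + x ∧ m + x < n).card := by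
    rw [← Finset.card_map (⟨fun x : Fin n => (x : ℤ), fun x y h => by ext; simpa using h⟩ : Fin n ↪ ℤ)]
    refine Finset.card_le_card fun y hy => ?_
    simp only [Finset.mem_Ico] at hy
    simp only [Finset.mem_map, Finset.mem_filter, Finset.mem_univ, true_and]
    refine ⟨⟨y.toNat, by omega⟩, ?_, ?_⟩
    · change 0 ≤ m + (y.toNat : ℤ) ∧ m + (y.toNat : ℤ) < n
      omega
    · change (y.toNat : ℤ) = y
      omega
  rw [Int.card_Ico] at h
  rcases abs_cases m with h1 | h1 <;> omega

lemma bad_tendsto {ν : ℕ} (m : Fin ν → ℤ) :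
    Tendsto (fun n : ℕ => ((n : ℝ) ^ ν)⁻¹ * (bad n m : ℝ)) atTop (𝓝 0) := by
  classical
  have h1 : ∀ i, Tendsto (fun n : ℕ =>
      ((Finset.univ.filter fun x : Fin n => 0 ≤ m i + x ∧ m i + x < n).card : ℝ) / n) atTop (𝓝 1) := by
    intro i
    have hlow : Tendsto (fun n : ℕ => 1 - (|m i| : ℝ) / n) atTop (𝓝 1) := by
      have := (tendsto_const_nhds (x := (1:ℝ))).sub (tendsto_const_div_atTop_nhds_zero_nat ((|m i| : ℝ)))
      simpa using this
    refine tendsto_of_tendsto_of_tendsto_of_le_of_le' hlow tendsto_const_nhds ?_ ?_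
    · filter_upwards [eventually_gt_atTop 0] with n hn
      have hn' : (0:ℝ) < n := by exact_mod_cast hn
      have := card_one n (m i)
      rw [le_div_iff₀ hn', sub_mul, div_mul_cancel₀ _ hn'.ne', one_mul]
      exact_mod_cast this
    · filter_upwards [eventually_gt_atTop 0] with n hn
      have hn' : (0:ℝ) < n := by exact_mod_cast hn
      rw [div_le_one hn']
      have := Finset.card_filter_le (Finset.univ : Finset (Fin n)) (fun x : Fin n => 0 ≤ m i + x ∧ m i + x < n)
      rw [Finset.card_fin] at this
      exact_mod_cast this
  have h2 := tendsto_finsetProd (Finset.univ : Finset (Fin ν)) (fun i _ => h1 i)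
  have h3 := (tendsto_const_nhds (x := (1:ℝ))).sub h2
  simp only [Finset.prod_const_one, sub_self] at h3
  refine h3.congr' ?_
  filter_upwards [eventually_gt_atTop 0] with n hn
  have hn' : (0:ℝ) < n := by exact_mod_cast hn
  have hc : (bad n m) + ∏ i, (Finset.univ.filter fun x : Fin n => 0 ≤ m i + x ∧ m i + x < n).card = n ^ ν := by
    rw [← Fintype.card_piFinset, bad]
    have := Finset.card_filter_add_card_filter_not (s := (Finset.univ : Finset (Fin ν → Fin n)))
      (fun k => m + bx k ∉ Set.range (bx : (Fin ν → Fin n) → _))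
    simp only [Finset.card_univ, Fintype.card_fun, Fintype.card_fin] at this
    rw [← this]
    congr 2
    ext k
    simp only [Fintype.mem_piFinset, Finset.mem_filter, Finset.mem_univ, true_and, not_not]
    rw [mem_range_bx]
    simp [bx]
  have hc' : (bad n m : ℝ) + ∏ i, ((Finset.univ.filter fun x : Fin n => 0 ≤ m i + x ∧ m i + x < n).card : ℝ) = (n:ℝ) ^ ν := by
    exact_mod_cast hc
  rw [Finset.prod_div_distrib, Finset.prod_const, Finset.card_fin, ← eq_sub_iff_add_eq] at *
  rw [hc']
  have : (n:ℝ)^ν ≠ 0 := by positivity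
  field_simp

lemma bad_le {ν : ℕ} (n : ℕ) (m : Fin ν → ℤ) : ((n : ℝ) ^ ν)⁻¹ * (bad n m : ℝ) ≤ 1 := by
  classical
  have : bad n m ≤ n ^ ν := by
    refine (Finset.card_filter_le _ _).trans ?_
    simp
  have h : (bad n m : ℝ) ≤ (n:ℝ) ^ ν := by exact_mod_cast this
  exact inv_mul_le_one_of_le₀ h (by positivity)

lemma fro_key {ν n : ℕ} {a b : (Fin ν → ℝ) → ℂ} (ha : BM a) (hb : BM b) (C : ℝ)
    (hC : ∀ x, ‖a x‖ ≤ C) :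
    fro (toeplitz n (fun x => a x * b x) - toeplitz n a * toeplitz n b) ≤
      C ^ 2 * ∑' m, (bad n m : ℝ) * ‖fourierCoefficient b m‖ ^ 2 := by
  classical
  let v : (Fin ν → Fin n) → (Fin ν → Fin n) → ℂ := fun k l => toeplitz n b l k
  let g : (Fin ν → Fin n) → (Fin ν → ℝ) → ℂ := fun k x => b x * ee (bx k) x - trig (v k) x
  have hg : ∀ k, BM (g k) := fun k => (hb.mul (BM_ee _)).sub (BM_trig _)
  have h1 : ∀ j k, (toeplitz n (fun x => a x * b x) - toeplitz n a * toeplitz n b) j k =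
      fourierCoefficient (fun x => a x * g k x) (bx j) := by
    intro j k
    have : (fun x => a x * g k x) = fun x => (a x * b x) * ee (bx k) x - a x * trig (v k) x := by
      ext x; simp only [g]; ring
    rw [this, fc_sub ((ha.mul hb).mul (BM_ee _)) (ha.mul (BM_trig _)), fc_shift, fc_mul_trig ha]
    rfl
  have h2 : ∀ k, ∑ j, ‖(toeplitz n (fun x => a x * b x) - toeplitz n a * toeplitz n b) j k‖ ^ 2 ≤
      C ^ 2 * cmean (fun x => ‖g k x‖ ^ 2) := by
    intro k
    simp only [h1]
    refine (bessel (ha.mul (hg k))).trans ?_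
    refine cmean_mono (ha.mul (hg k)) (hg k) C fun x => ?_
    rw [norm_mul]
    exact mul_le_mul_of_nonneg_right (hC x) (norm_nonneg _)
  have h3 : ∀ k, HasSum (fun m : Fin ν → ℤ => if m + bx k ∉ Set.range (bx : (Fin ν → Fin n) → _) then
      ‖fourierCoefficient b m‖ ^ 2 else 0) (cmean (fun x => ‖g k x‖ ^ 2)) := by
    intro k
    have := (hg k).parseval
    rw [← (Equiv.addRight (bx k)).hasSum_iff] at this
    convert this using 1
    ext m
    simp only [Function.comp, Equiv.coe_addRight]
    have hh : fourierCoefficient (g k) (m + bx k) =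
        fourierCoefficient b m - fourierCoefficient (trig (v k)) (m + bx k) := by
      rw [show g k = fun x => b x * ee (bx k) x - trig (v k) x from rfl,
        fc_sub (hb.mul (BM_ee _)) (BM_trig _), fc_shift, add_sub_cancel_right]
    rw [hh]
    split_ifs with hm
    · obtain ⟨l, hl⟩ := hm
      rw [← hl, fc_trig_bx]
      simp only [v, toeplitz_apply, hl, add_sub_cancel_right, sub_self, norm_zero]
      norm_num
    · rw [fc_trig_of_notMem _ _ hm, sub_zero]
  have h4 := hasSum_sum (s := Finset.univ) fun k _ => h3 k
  have h5 : (fun m : Fin ν → ℤ => ∑ k : Fin ν → Fin n, if m + bx k ∉ Set.range (bx : (Fin ν → Fin n) → _) then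
      ‖fourierCoefficient b m‖ ^ 2 else 0) = fun m => (bad n m : ℝ) * ‖fourierCoefficient b m‖ ^ 2 := by
    ext m
    rw [← Finset.sum_filter, Finset.sum_const, nsmul_eq_mul, bad]
  rw [h5] at h4
  rw [h4.tsum_eq, Finset.mul_sum]
  exact Finset.sum_le_sum fun k _ => h2 k

lemma fro_nonneg {m : Type*} [Fintype m] (X : Matrix m m ℂ) : 0 ≤ fro X :=
  Finset.sum_nonneg fun _ _ => Finset.sum_nonneg fun _ _ => by positivity

lemma key_tendsto {ν : ℕ} {a b : (Fin ν → ℝ) → ℂ} (ha : BM a) (hb : BM b) :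
    Tendsto (fun n : ℕ => ((n : ℝ) ^ ν)⁻¹ *
      fro (toeplitz n (fun x => a x * b x) - toeplitz n a * toeplitz n b)) atTop (𝓝 0) := by
  obtain ⟨C, hC⟩ := ha.2
  have h1 : Tendsto (fun n : ℕ => ∑' m, ((n : ℝ) ^ ν)⁻¹ * (bad n m : ℝ) * ‖fourierCoefficient b m‖ ^ 2)
      atTop (𝓝 (∑' m : Fin ν → ℤ, 0 * ‖fourierCoefficient b m‖ ^ 2)) := by
    refine tendsto_tsum_of_dominated_convergence (bound := fun m => ‖fourierCoefficient b m‖ ^ 2)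
      hb.parseval.summable (fun m => (bad_tendsto m).mul_const _) (Eventually.of_forall fun n m => ?_)
    rw [Real.norm_of_nonneg (by positivity)]
    exact mul_le_of_le_one_left (by positivity) (bad_le n m)
  have h2 := h1.const_mul (C ^ 2)
  simp only [zero_mul, tsum_zero, mul_zero] at h2
  refine squeeze_zero (fun n => mul_nonneg (by positivity) (fro_nonneg _)) (fun n => ?_) h2
  refine (mul_le_mul_of_nonneg_left (fro_key ha hb C hC) (by positivity)).trans (le_of_eq ?_)
  simp only [mul_assoc, tsum_mul_left]
  ring

end

section
open Topology
open scoped Matrix.Norms.L2Operator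

section fro
set_option linter.unusedSectionVars false
variable {m : Type*} [Fintype m] [DecidableEq m]

lemma fro_add_le (X Y : Matrix m m ℂ) : fro (X + Y) ≤ 2 * fro X + 2 * fro Y := by
  unfold fro
  simp only [Finset.mul_sum, ← Finset.sum_add_distrib]
  refine Finset.sum_le_sum fun k _ => Finset.sum_le_sum fun j _ => ?_
  have h := norm_add_le (X j k) (Y j k)
  have h2 := pow_le_pow_left₀ (norm_nonneg _) h 2
  rw [Matrix.add_apply]
  nlinarith [sq_nonneg (‖X j k‖ - ‖Y j k‖)]

lemma fro_mul_left (X Y : Matrix m m ℂ) : fro (X * Y) ≤ ‖X‖ ^ 2 * fro Y := by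
  unfold fro
  rw [Finset.mul_sum]
  refine Finset.sum_le_sum fun k _ => ?_
  have h := Matrix.l2_opNorm_mulVec X (WithLp.toLp 2 (fun j => Y j k))
  have h2 := pow_le_pow_left₀ (norm_nonneg _) h 2
  rw [mul_pow, EuclideanSpace.norm_sq_eq, EuclideanSpace.norm_sq_eq] at h2
  exact h2

lemma fro_star (X : Matrix m m ℂ) : fro Xᴴ = fro X := by
  unfold fro
  rw [Finset.sum_comm]
  simp [Matrix.conjTranspose_apply]

lemma fro_mul_right (X Y : Matrix m m ℂ) : fro (X * Y) ≤ ‖Y‖ ^ 2 * fro X := by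
  rw [← fro_star, Matrix.conjTranspose_mul, ← fro_star X, ← Matrix.l2_opNorm_conjTranspose Y]
  exact fro_mul_left _ _

lemma fro_one : fro (1 : Matrix m m ℂ) = Fintype.card m := by
  unfold fro
  have : ∀ j k : m, ‖(1 : Matrix m m ℂ) j k‖ ^ 2 = if j = k then 1 else 0 := by
    intro j k
    rw [Matrix.one_apply]
    split_ifs <;> simp
  simp [this]

lemma fro_le_norm (X : Matrix m m ℂ) : fro X ≤ Fintype.card m * ‖X‖ ^ 2 := by
  have := fro_mul_left X 1
  rw [mul_one, fro_one] at this
  linarith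

lemma trace_sq_le (X : Matrix m m ℂ) : (X.trace.re) ^ 2 ≤ Fintype.card m * fro X := by
  have h1 : |X.trace.re| ≤ ∑ k, ‖X k k‖ := by
    refine (Complex.abs_re_le_norm _).trans ?_
    exact norm_sum_le _ _
  have h2 : (X.trace.re) ^ 2 ≤ (∑ k, ‖X k k‖) ^ 2 := by
    rw [← sq_abs]
    exact pow_le_pow_left₀ (abs_nonneg _) h1 2
  refine h2.trans ((sq_sum_le_card_mul_sum_sq (s := Finset.univ)).trans ?_)
  rw [Finset.card_univ]
  refine mul_le_mul_of_nonneg_left ?_ (by positivity)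
  refine Finset.sum_le_sum fun k _ => ?_
  exact Finset.single_le_sum (f := fun j => ‖X j k‖ ^ 2) (fun j _ => by positivity) (Finset.mem_univ k)
end fro

def BR {ν : ℕ} (f : (Fin ν → ℝ) → ℝ) : Prop := Measurable f ∧ ∃ C : ℝ, ∀ x, |f x| ≤ C

lemma BR.bm {ν : ℕ} {f : (Fin ν → ℝ) → ℝ} (hf : BR f) : BM (fun x => (f x : ℂ)) := by
  obtain ⟨h, C, hC⟩ := hf
  exact ⟨Complex.measurable_ofReal.comp h, C, fun x => by simpa using hC x⟩

def TT {ν : ℕ} (n : ℕ) (a : (Fin ν → ℝ) → ℝ) := toeplitz n (fun x => (a x : ℂ))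

lemma TT_norm {ν : ℕ} (n : ℕ) {a : (Fin ν → ℝ) → ℝ} (ha : Measurable a) (C : ℝ) (hC0 : 0 ≤ C)
    (hC : ∀ x, |a x| ≤ C) : ‖TT n a‖ ≤ C :=
  norm_toeplitz_le n (Complex.measurable_ofReal.comp ha) C hC0 (fun x => by simpa using hC x)

lemma TT_add {ν : ℕ} (n : ℕ) {a b : (Fin ν → ℝ) → ℝ} (ha : BR a) (hb : BR b) :
    TT n (fun x => a x + b x) = TT n a + TT n b := by
  ext j k
  simp only [TT, toeplitz_apply, Matrix.add_apply, Complex.ofReal_add]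
  rw [fc_add ha.bm hb.bm]

lemma TT_sub {ν : ℕ} (n : ℕ) {a b : (Fin ν → ℝ) → ℝ} (ha : BR a) (hb : BR b) :
    TT n (fun x => a x - b x) = TT n a - TT n b := by
  ext j k
  simp only [TT, toeplitz_apply, Matrix.sub_apply, Complex.ofReal_sub]
  rw [fc_sub ha.bm hb.bm]

lemma TT_const {ν : ℕ} (n : ℕ) (c : ℝ) :
    TT n (fun _ : Fin ν → ℝ => c) = algebraMap ℝ (Matrix (Fin ν → Fin n) (Fin ν → Fin n) ℂ) c := by
  ext j k
  have := fc_smul (ν := ν) (c : ℂ) (fun _ => 1) (bx j - bx k)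
  simp only [mul_one] at this
  simp only [TT, toeplitz_apply, this, fc_one, sub_eq_zero, bx_inj.eq_iff, Matrix.algebraMap_matrix_apply]
  split_ifs <;> simp

lemma fc_star {ν : ℕ} (a : (Fin ν → ℝ) → ℝ) (j : Fin ν → ℤ) :
    star (fourierCoefficient (fun x => (a x : ℂ)) j) = fourierCoefficient (fun x => (a x : ℂ)) (-j) := by
  rw [fc_eq, fc_eq]
  simp only [RCLike.star_def, map_mul, map_inv₀, Complex.conj_ofReal]
  rw [← integral_conj]
  congr 2
  ext x
  simp only [map_mul, Complex.conj_ofReal]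
  congr 1
  unfold ee
  rw [← Complex.exp_conj]
  congr 1
  simp [Finset.sum_neg_distrib]

lemma TT_sa {ν : ℕ} (n : ℕ) (a : (Fin ν → ℝ) → ℝ) : IsSelfAdjoint (TT n a) := by
  rw [IsSelfAdjoint, Matrix.star_eq_conjTranspose]
  ext j k
  simp only [TT, Matrix.conjTranspose_apply, toeplitz_apply]
  rw [fc_star, neg_sub]

lemma spec_of_norm {m : Type*} [Fintype m] [DecidableEq m] (A : Matrix m m ℂ) (c r : ℝ)
    (h : ‖A - algebraMap ℝ _ c‖ ≤ r) : spectrum ℝ A ⊆ Icc (c - r) (c + r) := by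
  intro x hx
  have h1 : x - c ∈ spectrum ℝ (A - algebraMap ℝ _ c) := by
    have := spectrum.sub_singleton_eq (R := ℝ) A c
    rw [← this]
    exact Set.sub_mem_sub hx rfl
  have h2 := (spectrum.subset_closedBall_norm_mul (𝕜 := ℝ) (A - algebraMap ℝ (Matrix m m ℂ) c)) h1
  rcases isEmpty_or_nonempty m with hm | hm
  · exfalso
    have : Subsingleton (Matrix m m ℂ) := inferInstance
    have := spectrum.of_subsingleton (R := ℝ) A
    rw [this] at hx; exact hx
  · rw [mem_closedBall_zero_iff, norm_one, mul_one] at h2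
    have := abs_le.1 (h2.trans h)
    constructor <;> linarith [this.1, this.2]

lemma TT_spec {ν : ℕ} (n : ℕ) {a : (Fin ν → ℝ) → ℝ} (ha : BR a) (c d : ℝ) (h : ∀ x, a x ∈ Icc c d) :
    spectrum ℝ (TT n a) ⊆ Icc c d := by
  have h0 := h 0
  have hcd : c ≤ d := h0.1.trans h0.2
  have := spec_of_norm (TT n a) ((c + d) / 2) ((d - c) / 2) ?_
  · convert this using 2 <;> ring
  · rw [← TT_const, ← TT_sub n ha ⟨measurable_const, |(c+d)/2|, fun _ => le_rfl⟩]
    refine TT_norm n (ha.1.sub measurable_const) _ (by linarith) fun x => ?_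
    change |a x - (c + d) / 2| ≤ _
    rw [abs_le]
    constructor <;> linarith [(h x).1, (h x).2]

lemma TT_trace {ν : ℕ} (n : ℕ) {a : (Fin ν → ℝ) → ℝ} :
    (TT n a).trace.re = (n : ℝ) ^ ν * cmean a := by
  have h : fourierCoefficient (fun x => (a x : ℂ)) 0 = (cmean a : ℂ) := by
    rw [fc_eq, cmean]
    simp only [ee, neg_zero, Pi.zero_apply, Int.cast_zero, zero_mul, Finset.sum_const_zero, mul_zero,
      Complex.exp_zero, mul_one]
    rw [integral_complex_ofReal]
    push_cast; rfl
  simp only [Matrix.trace, Matrix.diag_apply, TT, toeplitz_apply, sub_self, h]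
  rw [Finset.sum_const, Finset.card_univ]
  simp [-Complex.ofReal_pow]
  left
  norm_cast

end

section
open Topology
open scoped Matrix.Norms.L2Operator

structure App {ν : ℕ} {ι : Type*} (l : Filter ι) (n : ι → ℕ)
    (A : ∀ i, Matrix (Fin ν → Fin (n i)) (Fin ν → Fin (n i)) ℂ) (a : (Fin ν → ℝ) → ℝ) : Prop where
  br : BR a
  bdd : ∃ C : ℝ, ∀ᶠ i in l, ‖A i‖ ≤ C
  lim : Tendsto (fun i => ((n i : ℝ) ^ ν)⁻¹ * fro (A i - TT (n i) a)) l (𝓝 0)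

lemma BR.add {ν : ℕ} {f g : (Fin ν → ℝ) → ℝ} (hf : BR f) (hg : BR g) : BR (fun x => f x + g x) := by
  obtain ⟨hf, C, hC⟩ := hf
  obtain ⟨hg, D, hD⟩ := hg
  exact ⟨hf.add hg, C + D, fun x => (abs_add_le _ _).trans (add_le_add (hC x) (hD x))⟩

lemma BR.mul {ν : ℕ} {f g : (Fin ν → ℝ) → ℝ} (hf : BR f) (hg : BR g) : BR (fun x => f x * g x) := by
  obtain ⟨hf, C, hC⟩ := hf
  obtain ⟨hg, D, hD⟩ := hg
  refine ⟨hf.mul hg, C * D, fun x => ?_⟩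
  rw [abs_mul]
  exact mul_le_mul (hC x) (hD x) (abs_nonneg _) ((abs_nonneg _).trans (hC x))

lemma BR_const {ν : ℕ} (c : ℝ) : BR (fun _ : Fin ν → ℝ => c) := ⟨measurable_const, |c|, fun _ => le_rfl⟩

section
variable {ν : ℕ} {ι : Type*} {l : Filter ι} {n : ι → ℕ}
    {A B : ∀ i, Matrix (Fin ν → Fin (n i)) (Fin ν → Fin (n i)) ℂ} {a b : (Fin ν → ℝ) → ℝ}

lemma N_card (n : ℕ) : (Fintype.card (Fin ν → Fin n) : ℝ) = (n : ℝ) ^ ν := by simp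

lemma nfro_le {n : ℕ} (X : Matrix (Fin ν → Fin n) (Fin ν → Fin n) ℂ) (C : ℝ) (h : ‖X‖ ≤ C) :
    ((n : ℝ) ^ ν)⁻¹ * fro X ≤ C ^ 2 := by
  have h1 := fro_le_norm X
  rw [N_card] at h1
  have h2 := pow_le_pow_left₀ (norm_nonneg X) h 2
  calc ((n : ℝ) ^ ν)⁻¹ * fro X ≤ ((n : ℝ) ^ ν)⁻¹ * ((n : ℝ) ^ ν * C ^ 2) := by
        refine mul_le_mul_of_nonneg_left (h1.trans ?_) (by positivity)
        exact mul_le_mul_of_nonneg_left h2 (by positivity)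
    _ = (((n : ℝ) ^ ν)⁻¹ * (n : ℝ) ^ ν) * C ^ 2 := by ring
    _ ≤ 1 * C ^ 2 := mul_le_mul_of_nonneg_right (inv_mul_le_one_of_le₀ le_rfl (by positivity)) (by positivity)
    _ = _ := one_mul _

lemma App.congr (h : App l n A a) (hAB : ∀ᶠ i in l, A i = B i) : App l n B a := by
  obtain ⟨C, hC⟩ := h.bdd
  refine ⟨h.br, ⟨C, ?_⟩, h.lim.congr' ?_⟩
  · filter_upwards [hC, hAB] with i h1 h2
    rwa [← h2]
  · filter_upwards [hAB] with i h2
    rw [h2]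

lemma App_TT (ha : BR a) : App l n (fun i => TT (n i) a) a := by
  obtain ⟨C, hC⟩ := ha.2
  refine ⟨ha, ⟨C, Eventually.of_forall fun i => TT_norm _ ha.1 C ((abs_nonneg _).trans (hC 0)) hC⟩, ?_⟩
  simp only [fro, sub_self, Matrix.zero_apply, norm_zero, ne_eq, OfNat.ofNat_ne_zero,
    not_false_eq_true, zero_pow, Finset.sum_const_zero, mul_zero]
  exact tendsto_const_nhds

lemma App_const (c : ℝ) : App l n (fun i => algebraMap ℝ (Matrix (Fin ν → Fin (n i)) (Fin ν → Fin (n i)) ℂ) c)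
    (fun _ => c) :=
  (App_TT (BR_const c)).congr (Eventually.of_forall fun i => TT_const _ _)

lemma App.add (hA : App l n A a) (hB : App l n B b) :
    App l n (fun i => A i + B i) (fun x => a x + b x) := by
  obtain ⟨C, hC⟩ := hA.bdd
  obtain ⟨D, hD⟩ := hB.bdd
  refine ⟨hA.br.add hB.br, ⟨C + D, ?_⟩, ?_⟩
  · filter_upwards [hC, hD] with i h1 h2
    exact (norm_add_le _ _).trans (add_le_add h1 h2)
  · have := (hA.lim.const_mul 2).add (hB.lim.const_mul 2)
    simp only [mul_zero, add_zero] at this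
    refine squeeze_zero (fun i => mul_nonneg (by positivity) (fro_nonneg _)) (fun i => ?_) this
    rw [TT_add _ hA.br hB.br, add_sub_add_comm]
    refine (mul_le_mul_of_nonneg_left (fro_add_le _ _) (by positivity)).trans (le_of_eq ?_)
    ring

lemma App.mul (hn : Tendsto n l atTop) (hA : App l n A a) (hB : App l n B b) :
    App l n (fun i => A i * B i) (fun x => a x * b x) := by
  obtain ⟨C, hC⟩ := hA.bdd
  obtain ⟨D, hD⟩ := hB.bdd
  obtain ⟨E, hE⟩ := hA.br.2
  have hE0 : 0 ≤ E := (abs_nonneg _).trans (hE 0)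
  refine ⟨hA.br.mul hB.br, ⟨C * D, ?_⟩, ?_⟩
  · filter_upwards [hC, hD] with i h1 h2
    exact (norm_mul_le _ _).trans (mul_le_mul h1 h2 (norm_nonneg _) ((norm_nonneg _).trans h1))
  · have hk := (key_tendsto hA.br.bm hB.br.bm).comp hn
    have := ((hA.lim.const_mul (2 * D ^ 2)).add (hB.lim.const_mul (4 * E ^ 2))).add (hk.const_mul 4)
    simp only [mul_zero, add_zero] at this
    refine squeeze_zero' (Eventually.of_forall fun i => mul_nonneg (by positivity) (fro_nonneg _)) ?_ this
    filter_upwards [hD] with i h2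
    have e0 : TT (n i) (fun x => a x * b x) = toeplitz (n i) (fun x => (a x : ℂ) * (b x : ℂ)) := by
      simp [TT]
    have e : A i * B i - TT (n i) (fun x => a x * b x) = (A i - TT (n i) a) * B i +
       (TT (n i) a * (B i - TT (n i) b) +
        -(toeplitz (n i) (fun x => (a x : ℂ) * (b x : ℂ)) - TT (n i) a * TT (n i) b)) := by
      rw [e0]; noncomm_ring
    have f1 := fro_mul_right (A i - TT (n i) a) (B i)
    have f2 := fro_mul_left (TT (n i) a) (B i - TT (n i) b)
    have f3 : ‖B i‖ ^ 2 ≤ D ^ 2 := pow_le_pow_left₀ (norm_nonneg _) h2 2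
    have f4 : ‖TT (n i) a‖ ^ 2 ≤ E ^ 2 := pow_le_pow_left₀ (norm_nonneg _) (TT_norm _ hA.br.1 E hE0 hE) 2
    have f5 := f1.trans (mul_le_mul_of_nonneg_right f3 (fro_nonneg _))
    have f6 := f2.trans (mul_le_mul_of_nonneg_right f4 (fro_nonneg _))
    have f7 : ∀ X : Matrix (Fin ν → Fin (n i)) (Fin ν → Fin (n i)) ℂ, fro (-X) = fro X := by
      intro X; simp [fro]
    have g1 := fro_add_le ((A i - TT (n i) a) * B i) (TT (n i) a * (B i - TT (n i) b) +
        -(toeplitz (n i) (fun x => (a x : ℂ) * (b x : ℂ)) - TT (n i) a * TT (n i) b))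
    have g2 := fro_add_le (TT (n i) a * (B i - TT (n i) b))
        (-(toeplitz (n i) (fun x => (a x : ℂ) * (b x : ℂ)) - TT (n i) a * TT (n i) b))
    rw [← e] at g1
    rw [f7] at g2
    have g3 : fro (A i * B i - TT (n i) (fun x => a x * b x)) ≤ 2 * D ^ 2 * fro (A i - TT (n i) a) +
      4 * E ^ 2 * fro (B i - TT (n i) b) +
      4 * fro (toeplitz (n i) (fun x => (a x : ℂ) * (b x : ℂ)) - TT (n i) a * TT (n i) b) := by
      linarith
    refine (mul_le_mul_of_nonneg_left g3 (by positivity)).trans (le_of_eq ?_)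
    simp only [Function.comp, TT]
    ring

lemma App.poly (hn : Tendsto n l atTop) (hA : App l n A a) (p : Polynomial ℝ) :
    App l n (fun i => Polynomial.aeval (A i) p) (fun x => p.eval (a x)) := by
  induction p using Polynomial.induction_on with
  | C r => simpa using App_const r
  | add p q hp hq => simpa using hp.add hq
  | monomial k r h =>
    have := h.mul hn hA
    simpa [pow_succ, mul_assoc] using this

lemma App.trace (hn : Tendsto n l atTop) (hA : App l n A a) :
    Tendsto (fun i => ((n i : ℝ) ^ ν)⁻¹ * (A i).trace.re) l (𝓝 (cmean a)) := by
  have h1 : Tendsto (fun i => ((n i : ℝ) ^ ν)⁻¹ * (A i - TT (n i) a).trace.re) l (𝓝 0) := by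
    have h := hA.lim.sqrt
    rw [Real.sqrt_zero] at h
    refine squeeze_zero_norm' ?_ h
    filter_upwards [hn.eventually_gt_atTop 0] with i hi
    have hi' : (0:ℝ) < (n i : ℝ) ^ ν := by positivity
    rw [Real.norm_eq_abs]
    refine Real.abs_le_sqrt ?_
    have := trace_sq_le (A i - TT (n i) a)
    rw [N_card] at this
    rw [mul_pow]
    refine (mul_le_mul_of_nonneg_left this (by positivity)).trans (le_of_eq ?_)
    field_simp
  have h2 := h1.add_const (cmean a)
  rw [zero_add] at h2
  refine h2.congr' ?_
  filter_upwards [hn.eventually_gt_atTop 0] with i hi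
  have hi' : (0:ℝ) < (n i : ℝ) ^ ν := by positivity
  rw [Matrix.trace_sub, Complex.sub_re, TT_trace]
  field_simp
  ring

lemma App.fcalc (hn : Tendsto n l atTop) (hA : App l n A a) {c d : ℝ}
    (hsa : ∀ᶠ i in l, IsSelfAdjoint (A i)) (hsp : ∀ᶠ i in l, spectrum ℝ (A i) ⊆ Icc c d)
    (had : ∀ x, a x ∈ Icc c d) (f : ι → ℝ → ℝ) (f₀ : ℝ → ℝ) (hf₀ : ContinuousOn f₀ (Icc c d))
    (hfm : Measurable fun x => f₀ (a x)) (hf : TendstoUniformlyOn f f₀ l (Icc c d)) :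
    App l n (fun i => cfc (f i) (A i)) (fun x => f₀ (a x)) := by
  obtain ⟨K, hK⟩ := isCompact_Icc.exists_bound_of_continuousOn hf₀
  have hK0 : 0 ≤ K := (norm_nonneg _).trans (hK _ (had 0))
  rw [Metric.tendstoUniformlyOn_iff] at hf
  have hbr : BR fun x => f₀ (a x) := ⟨hfm, K, fun x => hK _ (had x)⟩
  refine ⟨hbr, ⟨K + 1, ?_⟩, ?_⟩
  · filter_upwards [hsp, hf 1 one_pos] with i h1 h2
    refine norm_cfc_le (by linarith) fun x hx => ?_
    have := h2 x (h1 hx)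
    have h3 := hK x (h1 hx)
    rw [Real.dist_eq] at this
    rw [Real.norm_eq_abs] at *
    have := abs_sub_abs_le_abs_sub (f i x) (f₀ x)
    rw [abs_sub_comm] at this
    linarith
  · have key : ∀ ε > 0, ∀ᶠ i in l, ((n i : ℝ) ^ ν)⁻¹ *
        fro (cfc (f i) (A i) - TT (n i) (fun x => f₀ (a x))) ≤ 16 * ε ^ 2 := by
      intro ε hε
      obtain ⟨p, hp⟩ := exists_polynomial_near_of_continuousOn c d f₀ hf₀ ε hε
      have hP := hA.poly hn p
      have hlim := (hP.lim).eventually_le_const (show (0:ℝ) < ε ^ 2 by positivity)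
      filter_upwards [hsa, hsp, hf ε hε, hlim] with i h1 h2 h3 h4
      have n1 : ‖cfc (f i) (A i) - Polynomial.aeval (A i) p‖ ≤ 2 * ε := by
        have hfin : (spectrum ℝ (A i)).Finite := (A i).finite_real_spectrum
        rw [← cfc_polynomial p (A i) h1, ← cfc_sub (f i) p.eval (A i) (hfin.continuousOn _) (hfin.continuousOn _)]
        refine norm_cfc_le (by linarith) fun x hx => ?_
        have e1 := h3 x (h2 hx)
        have e2 := hp x (h2 hx)
        rw [Real.dist_eq] at e1
        rw [Real.norm_eq_abs]
        rw [abs_lt] at *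
        rw [abs_le]
        constructor <;> linarith
      have n2 : ‖TT (n i) (fun x => p.eval (a x)) - TT (n i) (fun x => f₀ (a x))‖ ≤ ε := by
        rw [← TT_sub _ hP.br hbr]
        exact TT_norm _ (hP.br.1.sub hbr.1) _ hε.le fun x => (hp _ (had x)).le
      have m1 := nfro_le _ _ n1
      have m2 := nfro_le _ _ n2
      have e : cfc (f i) (A i) - TT (n i) (fun x => f₀ (a x)) =
          (cfc (f i) (A i) - Polynomial.aeval (A i) p) +
          ((Polynomial.aeval (A i) p - TT (n i) (fun x => p.eval (a x))) + 
          (TT (n i) (fun x => p.eval (a x)) - TT (n i) (fun x => f₀ (a x)))) := by abel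
      have g1 := fro_add_le (cfc (f i) (A i) - Polynomial.aeval (A i) p)
          ((Polynomial.aeval (A i) p - TT (n i) (fun x => p.eval (a x))) + 
          (TT (n i) (fun x => p.eval (a x)) - TT (n i) (fun x => f₀ (a x))))
      have g2 := fro_add_le (Polynomial.aeval (A i) p - TT (n i) (fun x => p.eval (a x)))
          (TT (n i) (fun x => p.eval (a x)) - TT (n i) (fun x => f₀ (a x)))
      rw [← e] at g1
      have g3 := mul_le_mul_of_nonneg_left (g1.trans (add_le_add_right (mul_le_mul_of_nonneg_left g2 zero_le_two) _))
        (show 0 ≤ ((n i : ℝ) ^ ν)⁻¹ by positivity)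
      nlinarith
    rw [Metric.tendsto_nhds]
    intro ε hε
    filter_upwards [key (Real.sqrt (ε / 32)) (by positivity)] with i hi
    rw [Real.sq_sqrt (by positivity)] at hi
    rw [Real.dist_eq, sub_zero, abs_of_nonneg (mul_nonneg (by positivity) (fro_nonneg _))]
    linarith
end

end

section
open Topology
open scoped Matrix.Norms.L2Operator

lemma unif_of_tendsto {ι α : Type*} [TopologicalSpace α] {l : Filter ι} {F : ι → α → ℝ} {f : α → ℝ}
    {s : Set α} (hs : IsCompact s)
    (h : ∀ x ∈ s, Tendsto (fun y : ι × α => F y.1 y.2) (l ×ˢ 𝓝[s] x) (𝓝 (f x)))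
    (hf : ContinuousOn f s) : TendstoUniformlyOn F f l s := by
  rw [← tendstoLocallyUniformlyOn_iff_tendstoUniformlyOn_of_compact hs,
    tendstoLocallyUniformlyOn_iff_forall_tendsto]
  intro x hx
  have h1 : Tendsto (fun y : ι × α => f y.2) (l ×ˢ 𝓝[s] x) (𝓝 (f x)) := (hf x hx).tendsto.comp tendsto_snd
  exact (h1.prodMk_nhds (h x hx)).mono_right (nhds_le_uniformity _)

lemma cont_of_tendsto {ι α : Type*} [TopologicalSpace α] {l : Filter ι} [l.NeBot] {F : ι → α → ℝ} {f : α → ℝ}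
    {s : Set α} 
    (h : ∀ x ∈ s, Tendsto (fun y : ι × α => F y.1 y.2) (l ×ˢ 𝓝[s] x) (𝓝 (f x))) : ContinuousOn f s := by
  intro x hx
  rw [ContinuousWithinAt, Metric.tendsto_nhds]
  intro ε hε
  have h1 := (Metric.tendsto_nhds.1 (h x hx)) (ε / 2) (by positivity)
  have h2 := (Filter.eventually_swap_iff.1 h1).curry
  filter_upwards [h2, self_mem_nhdsWithin] with y hy hys
  have h3 : Tendsto (fun i => F i y) l (𝓝 (f y)) := by
    refine (h y hys).comp (tendsto_id.prodMk ?_)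
    exact tendsto_nhdsWithin_iff.2 ⟨tendsto_const_nhds, Eventually.of_forall fun _ => hys⟩
  have h4 : dist (f y) (f x) ≤ ε / 2 := by
    refine le_of_tendsto (h3.dist tendsto_const_nhds) ?_
    filter_upwards [hy] with i hi
    exact hi.le
  linarith

lemma Rmat_eq {m : Type*} [Fintype m] [DecidableEq m] (Q : Matrix m m ℂ) (hQ : IsSelfAdjoint Q)
    (η M : ℝ) (hη : 0 < η) (hsp : spectrum ℝ Q ⊆ Icc η M) :
    Rmat Q = cfc (fun x : ℝ => x * (1 + x)⁻¹) Q := by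
  have hc : ∀ f : ℝ → ℝ, ContinuousOn f (spectrum ℝ Q) := fun f => Q.finite_real_spectrum.continuousOn f
  have h1 : cfc (fun x : ℝ => 1 + x) Q = Q + 1 := by
    rw [cfc_add Q (fun _ => (1:ℝ)) (fun x => x) (hc _) (hc _), cfc_const_one ℝ Q, cfc_id' ℝ Q, add_comm]
  have h2 : cfc (fun x : ℝ => (1 + x)⁻¹) Q * (Q + 1) = 1 := by
    rw [← h1, ← cfc_mul _ _ Q (hc _) (hc _), ← cfc_const_one ℝ Q]
    refine cfc_congr fun x hx => ?_
    have := (hsp hx).1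
    have h0 : (1 + x) ≠ 0 := by linarith
    field_simp
  rw [Rmat, Matrix.inv_eq_left_inv h2]
  rw [cfc_mul (fun x => x) (fun x => (1 + x)⁻¹) Q (hc _) (hc _), cfc_id' ℝ Q]

lemma mpow_Rmat_eq {m : Type*} [Fintype m] [DecidableEq m] (Q : Matrix m m ℂ) (hQ : IsSelfAdjoint Q)
    (η M : ℝ) (hη : 0 < η) (hsp : spectrum ℝ Q ⊆ Icc η M) (s : ℝ) :
    mpow (Rmat Q) s = cfc (fun x : ℝ => (x * (1 + x)⁻¹) ^ s) Q := by
  rw [Rmat_eq Q hQ η M hη hsp, mpow,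
    cfc_comp' (fun x : ℝ => x ^ s) (fun x : ℝ => x * (1 + x)⁻¹) Q
      ((Q.finite_real_spectrum.image _).continuousOn _) (Q.finite_real_spectrum.continuousOn _) hQ]

lemma r_pos {η M x : ℝ} (hη : 0 < η) (hx : x ∈ Icc η M) : 0 < x * (1 + x)⁻¹ := by
  have : 0 < x := hη.trans_le hx.1
  positivity

lemma r_le {η M x : ℝ} (hη : 0 < η) (hx : x ∈ Icc η M) : x * (1 + x)⁻¹ ≤ M * (1 + M)⁻¹ := by
  have h0 : 0 < x := hη.trans_le hx.1
  have h1 : 0 < M := h0.trans_le hx.2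
  rw [← div_eq_mul_inv, ← div_eq_mul_inv, div_le_div_iff₀ (by positivity) (by positivity)]
  nlinarith [hx.2]

lemma norm_mpow_le {m : Type*} [Fintype m] [DecidableEq m] (Q : Matrix m m ℂ) (hQ : IsSelfAdjoint Q)
    (η M : ℝ) (hη : 0 < η) (hηM : η ≤ M) (hsp : spectrum ℝ Q ⊆ Icc η M) (s : ℝ) (hs : 0 ≤ s) :
    ‖mpow (Rmat Q) s‖ ≤ (M * (1 + M)⁻¹) ^ s := by
  have hM : 0 < M := hη.trans_le hηM
  rw [mpow_Rmat_eq Q hQ η M hη hsp]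
  refine norm_cfc_le (by positivity) fun x hx => ?_
  have h0 := r_pos hη (hsp hx)
  rw [Real.norm_of_nonneg (by positivity)]
  exact Real.rpow_le_rpow h0.le (r_le hη (hsp hx)) hs

lemma d_prod {δ t : ℝ} (hδ : 0 < δ) : δ ^ (t / 2) * δ ^ (1 - t) * δ ^ (t / 2) = δ := by
  rw [← Real.rpow_add hδ, ← Real.rpow_add hδ]
  rw [show t / 2 + (1 - t) + t / 2 = 1 by ring, Real.rpow_one]

lemma norm_W_le {m : Type*} [Fintype m] [DecidableEq m] (Q₁ Q₂ : Matrix m m ℂ)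
    (hQ₁ : IsSelfAdjoint Q₁) (hQ₂ : IsSelfAdjoint Q₂)
    (η M : ℝ) (hη : 0 < η) (hηM : η ≤ M) (hsp₁ : spectrum ℝ Q₁ ⊆ Icc η M)
    (hsp₂ : spectrum ℝ Q₂ ⊆ Icc η M) (t : ℝ) (ht : t ∈ Icc (0:ℝ) 1) :
    ‖Wmat Q₁ Q₂ t‖ ≤ M * (1 + M)⁻¹ := by
  have hM : 0 < M := hη.trans_le hηM
  have hδ : 0 < M * (1 + M)⁻¹ := by positivity
  have h1 := norm_mpow_le Q₁ hQ₁ η M hη hηM hsp₁ (t / 2) (by linarith [ht.1])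
  have h2 := norm_mpow_le Q₂ hQ₂ η M hη hηM hsp₂ (1 - t) (by linarith [ht.2])
  rw [Wmat]
  refine (norm_mul_le _ _).trans ?_
  refine le_trans ?_ (d_prod (t := t) hδ).le
  refine mul_le_mul ((norm_mul_le _ _).trans ?_) h1 (norm_nonneg _) (by positivity)
  exact mul_le_mul h1 h2 (norm_nonneg _) (by positivity)

lemma W_sa {m : Type*} [Fintype m] [DecidableEq m] (Q₁ Q₂ : Matrix m m ℂ) (t : ℝ) :
    IsSelfAdjoint (Wmat Q₁ Q₂ t) := by
  have h : ∀ (Q : Matrix m m ℂ) s, star (mpow Q s) = mpow Q s := fun Q s => 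
    (cfc_predicate (fun x : ℝ => x ^ s) Q : IsSelfAdjoint _)
  rw [IsSelfAdjoint, Wmat, star_mul, star_mul, h, h, mul_assoc]

section main
variable {ν : ℕ} {q₁ q₂ q : (Fin ν → ℝ) → ℝ} {η M : ℝ}

lemma bnd_br (hη : 0 < η) (hm : Measurable q) (hq : ∀ x, q x ∈ Icc η M) : BR q :=
  ⟨hm, M, fun x => by rw [abs_of_pos (hη.trans_le (hq x).1)]; exact (hq x).2⟩

lemma App_pow {ι : Type*} {l : Filter ι} {n : ι → ℕ} (hn : Tendsto n l atTop)
    (hη : 0 < η) (hm : Measurable q) (hq : ∀ x, q x ∈ Icc η M) (s : ι → ℝ) (s₀ : ℝ)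
    (hs : Tendsto s l (𝓝 s₀)) :
    App l n (fun i => mpow (Rmat (TT (n i) q)) (s i)) (fun x => (q x * (1 + q x)⁻¹) ^ s₀) := by
  have hbr := bnd_br hη hm hq
  have hcont : ∀ x ∈ Icc η M, ContinuousAt (fun x : ℝ => x * (1 + x)⁻¹) x := by
    intro x hx
    have : 0 < x := hη.trans_le hx.1
    have : 1 + x ≠ 0 := by positivity
    fun_prop (disch := assumption)
  have h0 : ContinuousOn (fun x : ℝ => (x * (1 + x)⁻¹) ^ s₀) (Icc η M) := fun x hx =>
    ((hcont x hx).rpow_const (Or.inl (r_pos hη hx).ne')).continuousWithinAt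
  have := (App_TT (l := l) (n := n) hbr).fcalc hn (Eventually.of_forall fun i => TT_sa _ _)
    (Eventually.of_forall fun i => TT_spec _ hbr η M hq) hq
    (fun i x => (x * (1 + x)⁻¹) ^ (s i)) (fun x => (x * (1 + x)⁻¹) ^ s₀) h0 (by fun_prop) ?_
  · refine this.congr (Eventually.of_forall fun i => ?_)
    rw [mpow_Rmat_eq _ (TT_sa _ _) η M hη (TT_spec _ hbr η M hq)]
  · refine unif_of_tendsto isCompact_Icc (fun x hx => ?_) h0
    have hx1 : Tendsto (fun y : ι × ℝ => y.2 * (1 + y.2)⁻¹) (l ×ˢ 𝓝[Icc η M] x) (𝓝 (x * (1 + x)⁻¹)) :=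
      (hcont x hx).tendsto.comp (tendsto_snd.mono_right nhdsWithin_le_nhds)
    exact hx1.rpow (hs.comp tendsto_fst) (Or.inl (r_pos hη hx).ne')

lemma App_log {ι : Type*} {l : Filter ι} {n : ι → ℕ} (hn : Tendsto n l atTop)
    {A : ∀ i, Matrix (Fin ν → Fin (n i)) (Fin ν → Fin (n i)) ℂ} {a : (Fin ν → ℝ) → ℝ}
    (hA : App l n A a) {c d : ℝ} (hc : 0 < c)
    (hsa : ∀ᶠ i in l, IsSelfAdjoint (A i)) (hsp : ∀ᶠ i in l, spectrum ℝ (A i) ⊆ Icc c d)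
    (had : ∀ x, a x ∈ Icc c d) :
    App l n (fun i => mlog (A i)) (fun x => Real.log (a x)) := by
  have h0 : ContinuousOn Real.log (Icc c d) := fun x hx =>
    (Real.continuousAt_log (hc.trans_le hx.1).ne').continuousWithinAt
  refine hA.fcalc hn hsa hsp had (fun _ => Real.log) Real.log h0 (Real.measurable_log.comp hA.br.1) ?_
  rw [Metric.tendstoUniformlyOn_iff]
  intro ε hε
  refine Eventually.of_forall fun i x _ => ?_
  rwa [dist_self]

lemma BR.integrable {f : (Fin ν → ℝ) → ℝ} (hf : BR f) : Integrable f (volume.restrict (cube ν)) := by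
  obtain ⟨hf, C, hC⟩ := hf
  exact Integrable.of_bound hf.aestronglyMeasurable C (Eventually.of_forall hC)

lemma log_identity {t a b : ℝ} (ha : 0 < a) (hb : 0 < b)
    (hw : 0 < 1 + -1 * ((a * (1 + a)⁻¹) ^ (t / 2) * (b * (1 + b)⁻¹) ^ (1 - t) * (a * (1 + a)⁻¹) ^ (t / 2))) :
    Real.log ((1 + a) ^ t * (1 + b) ^ (1 - t) - a ^ t * b ^ (1 - t)) =
      t * Real.log (a + 1) + (1 - t) * Real.log (b + 1) +
      Real.log (1 + -1 * ((a * (1 + a)⁻¹) ^ (t / 2) * (b * (1 + b)⁻¹) ^ (1 - t) * (a * (1 + a)⁻¹) ^ (t / 2))) := by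
  have h1 : (0:ℝ) < 1 + a := by positivity
  have h2 : (0:ℝ) < 1 + b := by positivity
  have ra : 0 < a * (1 + a)⁻¹ := by positivity
  have rb : 0 < b * (1 + b)⁻¹ := by positivity
  have e1 : (1 + a) ^ t * (1 + b) ^ (1 - t) - a ^ t * b ^ (1 - t) = (1 + a) ^ t * ((1 + b) ^ (1 - t) *
      (1 + -1 * ((a * (1 + a)⁻¹) ^ (t / 2) * (b * (1 + b)⁻¹) ^ (1 - t) * (a * (1 + a)⁻¹) ^ (t / 2)))) := by
    have f1 : (a * (1 + a)⁻¹) ^ (t / 2) * (b * (1 + b)⁻¹) ^ (1 - t) * (a * (1 + a)⁻¹) ^ (t / 2) =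
      (a * (1 + a)⁻¹) ^ t * (b * (1 + b)⁻¹) ^ (1 - t) := by
      have : (a * (1 + a)⁻¹) ^ t = (a * (1 + a)⁻¹) ^ (t / 2) * (a * (1 + a)⁻¹) ^ (t / 2) := by
        rw [← Real.rpow_add ra]; congr 1; ring
      rw [this]; ring
    have f2 : a ^ t = (1 + a) ^ t * (a * (1 + a)⁻¹) ^ t := by
      rw [← Real.mul_rpow h1.le ra.le]; congr 1; field_simp
    have f3 : b ^ (1 - t) = (1 + b) ^ (1 - t) * (b * (1 + b)⁻¹) ^ (1 - t) := by
      rw [← Real.mul_rpow h2.le rb.le]; congr 1; field_simp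
    rw [f1, f2, f3]; ring
  rw [e1, Real.log_mul (Real.rpow_pos_of_pos h1 _).ne' (mul_pos (Real.rpow_pos_of_pos h2 _) hw).ne',
    Real.log_mul (Real.rpow_pos_of_pos h2 _).ne' hw.ne', Real.log_rpow h1, Real.log_rpow h2,
    add_comm 1 a, add_comm 1 b]
  ring

lemma psi_tendsto (hη : 0 < η) (hηM : η ≤ M) (hm₁ : Measurable q₁) (hm₂ : Measurable q₂)
    (hq₁ : ∀ x, q₁ x ∈ Icc η M) (hq₂ : ∀ x, q₂ x ∈ Icc η M) (t₀ : ℝ) (ht₀ : t₀ ∈ Icc (0:ℝ) 1) :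
    Tendsto (fun y : ℕ × ℝ => ((y.1 : ℝ) ^ ν)⁻¹ * psiN q₁ q₂ y.1 y.2) (atTop ×ˢ 𝓝[Icc 0 1] t₀)
      (𝓝 (psiLimit q₁ q₂ t₀)) := by
  set l : Filter (ℕ × ℝ) := atTop ×ˢ 𝓝[Icc 0 1] t₀ with hl
  have hM : 0 < M := hη.trans_le hηM
  have hn : Tendsto (Prod.fst : ℕ × ℝ → ℕ) l atTop := tendsto_fst
  have ht : Tendsto (Prod.snd : ℕ × ℝ → ℝ) l (𝓝 t₀) := tendsto_snd.mono_right nhdsWithin_le_nhds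
  have htm : ∀ᶠ i in l, i.2 ∈ Icc (0:ℝ) 1 := tendsto_snd.eventually self_mem_nhdsWithin
  have b1 := bnd_br hη hm₁ hq₁
  have b2 := bnd_br hη hm₂ hq₂
  have hlog1 : ∀ {q : (Fin ν → ℝ) → ℝ}, Measurable q → (∀ x, q x ∈ Icc η M) →
      App l Prod.fst (fun i => mlog (TT i.1 q + 1)) (fun x => Real.log (q x + 1)) := by
    intro q hm hq
    have b := bnd_br hη hm hq
    have h1 : App l Prod.fst (fun i => TT i.1 q + 1) (fun x => q x + 1) := by
      simpa using (App_TT (l := l) (n := Prod.fst) b).add (App_const 1)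
    have h2 : ∀ n, TT n q + 1 = TT n (fun x => q x + 1) := by
      intro n
      rw [TT_add n b (BR_const 1), TT_const, map_one]
    refine App_log hn h1 (c := η + 1) (d := M + 1) (by positivity) ?_ ?_ ?_
    · exact Eventually.of_forall fun i => by rw [h2]; exact TT_sa _ _
    · exact Eventually.of_forall fun i => by
        rw [h2]
        exact TT_spec _ h1.br _ _ fun x => ⟨by linarith [(hq x).1], by linarith [(hq x).2]⟩
    · exact fun x => ⟨by linarith [(hq x).1], by linarith [(hq x).2]⟩
  have L1 := hlog1 hm₁ hq₁
  have L2 := hlog1 hm₂ hq₂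
  have P1 := App_pow hn hη hm₁ hq₁ (fun i => i.2 / 2) (t₀ / 2) (ht.div_const 2)
  have P2 := App_pow hn hη hm₂ hq₂ (fun i => 1 - i.2) (1 - t₀) (ht.const_sub 1)
  have PW := (P1.mul hn P2).mul hn P1
  have PW1 := (App_const 1).add ((App_const (-1)).mul hn PW)
  have PW2 : App l Prod.fst (fun i => 1 - Wmat (TT i.1 q₁) (TT i.1 q₂) i.2) _ := 
    PW1.congr (Eventually.of_forall fun i => by simp [Wmat, sub_eq_add_neg])
  have hδ : 0 < M * (1 + M)⁻¹ := by positivity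
  have hδ1 : M * (1 + M)⁻¹ < 1 := by
    rw [← div_eq_mul_inv, div_lt_one (by positivity)]; linarith
  have hw : ∀ x, 1 + -1 * ((q₁ x * (1 + q₁ x)⁻¹) ^ (t₀ / 2) * (q₂ x * (1 + q₂ x)⁻¹) ^ (1 - t₀) *
      (q₁ x * (1 + q₁ x)⁻¹) ^ (t₀ / 2)) ∈ Icc (1 - M * (1 + M)⁻¹) (1 + M * (1 + M)⁻¹) := by
    intro x
    have r1 := r_pos hη (hq₁ x)
    have r2 := r_pos hη (hq₂ x)
    have s1 := Real.rpow_le_rpow r1.le (r_le hη (hq₁ x)) (show 0 ≤ t₀ / 2 by linarith [ht₀.1])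
    have s2 := Real.rpow_le_rpow r2.le (r_le hη (hq₂ x)) (show 0 ≤ 1 - t₀ by linarith [ht₀.2])
    have u0 : 0 ≤ (q₁ x * (1 + q₁ x)⁻¹) ^ (t₀ / 2) * (q₂ x * (1 + q₂ x)⁻¹) ^ (1 - t₀) *
      (q₁ x * (1 + q₁ x)⁻¹) ^ (t₀ / 2) := by positivity
    have u1 : (q₁ x * (1 + q₁ x)⁻¹) ^ (t₀ / 2) * (q₂ x * (1 + q₂ x)⁻¹) ^ (1 - t₀) *
      (q₁ x * (1 + q₁ x)⁻¹) ^ (t₀ / 2) ≤ M * (1 + M)⁻¹ := by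
      refine le_trans ?_ (d_prod (t := t₀) hδ).le
      refine mul_le_mul (mul_le_mul s1 s2 (by positivity) (by positivity)) s1 (by positivity) (by positivity)
    constructor <;> linarith
  have L3 := App_log hn PW2 (c := 1 - M * (1 + M)⁻¹) (d := 1 + M * (1 + M)⁻¹) (by linarith)
    (Eventually.of_forall fun i => (IsSelfAdjoint.one _).sub (W_sa _ _ _)) (by
      filter_upwards [htm] with i hi
      refine spec_of_norm _ 1 _ ?_
      rw [map_one, sub_sub_cancel_left, norm_neg]
      exact norm_W_le _ _ (TT_sa _ _) (TT_sa _ _) η M hη hηM (TT_spec _ b1 _ _ hq₁) (TT_spec _ b2 _ _ hq₂) _ hi) hw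
  have T1 := L1.trace hn
  have T2 := L2.trace hn
  have T3 := L3.trace hn
  have T := ((ht.neg.mul T1).sub ((ht.const_sub 1).mul T2)).sub T3
  have hlim : psiLimit q₁ q₂ t₀ = -t₀ * cmean (fun x => Real.log (q₁ x + 1)) -
      (1 - t₀) * cmean (fun x => Real.log (q₂ x + 1)) - cmean (fun x => Real.log (1 + -1 * ((q₁ x * (1 + q₁ x)⁻¹) ^ (t₀ / 2) * (q₂ x * (1 + q₂ x)⁻¹) ^ (1 - t₀) *
      (q₁ x * (1 + q₁ x)⁻¹) ^ (t₀ / 2)))) := by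
    have : ∀ x, Real.log ((1 + q₁ x) ^ t₀ * (1 + q₂ x) ^ (1 - t₀) - (q₁ x) ^ t₀ * (q₂ x) ^ (1 - t₀)) = _ :=
      fun x => log_identity (hη.trans_le (hq₁ x).1) (hη.trans_le (hq₂ x).1)
        (lt_of_lt_of_le (by linarith) (hw x).1)
    unfold psiLimit cmean
    simp only [this]
    have hI : Integrable (fun x => t₀ * Real.log (q₁ x + 1) + (1 - t₀) * Real.log (q₂ x + 1))
        (volume.restrict (cube ν)) :=
      (L1.br.integrable.const_mul _).add (L2.br.integrable.const_mul _)
    rw [integral_add hI L3.br.integrable,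
      integral_add (L1.br.integrable.const_mul _) (L2.br.integrable.const_mul _),
      integral_const_mul, integral_const_mul]
    ring
  rw [hlim]
  refine T.congr fun i => ?_
  simp only [psiN, TT]
  ring
end main

lemma psi_unif {ν : ℕ} {q₁ q₂ : (Fin ν → ℝ) → ℝ} {η M : ℝ} (hη : 0 < η) (hηM : η ≤ M)
    (hm₁ : Measurable q₁) (hm₂ : Measurable q₂)
    (hq₁ : ∀ x, q₁ x ∈ Icc η M) (hq₂ : ∀ x, q₂ x ∈ Icc η M) :
    TendstoUniformlyOn (fun (n : ℕ) (t : ℝ) => ((n : ℝ) ^ ν)⁻¹ * psiN q₁ q₂ n t)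
      (psiLimit q₁ q₂) atTop (Set.Icc 0 1) := by
  have h := psi_tendsto hη hηM hm₁ hm₂ hq₁ hq₂
  exact unif_of_tendsto isCompact_Icc h (cont_of_tendsto (l := atTop)
    (F := fun (n : ℕ) (t : ℝ) => ((n : ℝ) ^ ν)⁻¹ * psiN q₁ q₂ n t) h)

end

/-- **Uniform convergence of the mean overlap exponents.**  For bounded measurable
`q₁, q₂` with `η ≤ q_k ≤ M` a.e. (`0 < η ≤ M`), the functions `(1/n^ν) ψ_n` converge
uniformly on `[0,1]` to `ψ`. -/
theorem psiN_tendstoUniformly {ν : ℕ} (hν : 1 ≤ ν)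
    (q₁ q₂ : (Fin ν → ℝ) → ℝ) (η M : ℝ) (hη : 0 < η) (hηM : η ≤ M)
    (hmeas₁ : Measurable q₁) (hmeas₂ : Measurable q₂)
    (hq₁ : ∀ᵐ x ∂(volume.restrict (cube ν)), q₁ x ∈ Set.Icc η M)
    (hq₂ : ∀ᵐ x ∂(volume.restrict (cube ν)), q₂ x ∈ Set.Icc η M) :
    TendstoUniformlyOn (fun (n : ℕ) (t : ℝ) => ((n : ℝ) ^ ν)⁻¹ * psiN q₁ q₂ n t)
      (psiLimit q₁ q₂) atTop (Set.Icc 0 1) := by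
  have hcl : ∀ (q : (Fin ν → ℝ) → ℝ) x, max η (min M (q x)) ∈ Icc η M := fun q x =>
    ⟨le_max_left _ _, max_le hηM (min_le_left _ _)⟩
  have hae : ∀ {q : (Fin ν → ℝ) → ℝ}, (∀ᵐ x ∂(volume.restrict (cube ν)), q x ∈ Set.Icc η M) →
      ∀ᵐ x ∂(volume.restrict (cube ν)), max η (min M (q x)) = q x := by
    intro q hq
    filter_upwards [hq] with x hx
    rw [min_eq_right hx.2, max_eq_right hx.1]
  have hT : ∀ {q : (Fin ν → ℝ) → ℝ}, (∀ᵐ x ∂(volume.restrict (cube ν)), q x ∈ Set.Icc η M) → ∀ n,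
      toeplitz n (fun x => ((max η (min M (q x)) : ℝ) : ℂ)) = toeplitz n (fun x => (q x : ℂ)) := by
    intro q hq n
    ext j k
    rw [toeplitz_apply, toeplitz_apply, fc_eq, fc_eq]
    congr 1
    refine integral_congr_ae ?_
    filter_upwards [hae hq] with x hx
    rw [hx]
  have key := psi_unif hη hηM (q₁ := fun x => max η (min M (q₁ x))) (q₂ := fun x => max η (min M (q₂ x)))
    (measurable_const.max (measurable_const.min hmeas₁)) (measurable_const.max (measurable_const.min hmeas₂))
    (hcl q₁) (hcl q₂)
  have e1 : ∀ n t, psiN (fun x => max η (min M (q₁ x))) (fun x => max η (min M (q₂ x))) n t = psiN q₁ q₂ n t := by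
    intro n t
    simp only [psiN, hT hq₁, hT hq₂]
  have e2 : psiLimit (fun x => max η (min M (q₁ x))) (fun x => max η (min M (q₂ x))) = psiLimit q₁ q₂ := by
    ext t
    unfold psiLimit
    congr 2
    refine integral_congr_ae ?_
    filter_upwards [hae hq₁, hae hq₂] with x h1 h2
    simp only [h1, h2]
  simpa only [e1, e2] using key

end
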